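/- Let m ∼ N(μ, Σ) on ℝⁿ with Σ positive definite, v a selection vector, y ∈ {-1,1}, z = y v'μ/√(v'Σv + 1), η = Φ(z). The mean of the probit-tilted posterior p(m) ∝ φ(m; μ, Σ)Φ(y v'm) equals μ + y Σv · φ(z)/(η √(v'Σv + 1)). -/

import Mathlib

open MeasureTheory Matrix

noncomputable def stdPdf (x : ℝ) : ℝ :=
  (Real.sqrt (2 * Real.pi))⁻¹ * Real.exp (-x ^ 2 / 2)

noncomputable def stdCdf (x : ℝ) : ℝ := ∫ u in Set.Iic x, stdPdf u

noncomputable def mvPdf {n : ℕ} (μ : Fin n → ℝ) (S : Matrix (Fin n) (Fin n) ℝ)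
    (x : Fin n → ℝ) : ℝ :=
  (Real.sqrt ((2 * Real.pi) ^ n * S.det))⁻¹ *
    Real.exp (-(1 / 2) * ((x - μ) ⬝ᵥ (S⁻¹ *ᵥ (x - μ))))

section GaussianTilt

open ProbabilityTheory

lemma stdPdf_eq_gaussianPDFReal : stdPdf = gaussianPDFReal 0 1 := by
  ext x
  simp [stdPdf, gaussianPDFReal]

lemma stdPdf_pos (x : ℝ) : 0 < stdPdf x := by
  unfold stdPdf
  positivity

lemma continuous_stdPdf : Continuous stdPdf := by
  unfold stdPdf
  fun_prop

lemma integrable_stdPdf : Integrable stdPdf := by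
  rw [stdPdf_eq_gaussianPDFReal]
  exact integrable_gaussianPDFReal 0 1

lemma ofReal_stdCdf (x : ℝ) : ENNReal.ofReal (stdCdf x) = gaussianReal 0 1 (Set.Iic x) := by
  rw [gaussianReal_apply_eq_integral _ one_ne_zero, stdCdf, stdPdf_eq_gaussianPDFReal]

lemma stdCdf_nonneg (x : ℝ) : 0 ≤ stdCdf x :=
  setIntegral_nonneg measurableSet_Iic fun u _ ↦ (stdPdf_pos u).le

lemma stdCdf_le_one (x : ℝ) : stdCdf x ≤ 1 := by
  rw [← ENNReal.ofReal_le_one, ofReal_stdCdf]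
  exact prob_le_one

lemma stdCdf_pos (x : ℝ) : 0 < stdCdf x := by
  rw [stdCdf, setIntegral_pos_iff_support_of_nonneg_ae (ae_of_all _ fun u ↦ (stdPdf_pos u).le)
    integrable_stdPdf.integrableOn, Function.support_eq_univ fun u ↦ (stdPdf_pos u).ne']
  simp

lemma hasDerivAt_stdCdf (x : ℝ) : HasDerivAt stdCdf (stdPdf x) x := by
  have h : stdCdf = fun x ↦ stdCdf 0 + ∫ u in (0 : ℝ)..x, stdPdf u := by
    ext x
    rw [← intervalIntegral.integral_Iic_sub_Iic integrable_stdPdf.integrableOn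
      integrable_stdPdf.integrableOn]
    simp [stdCdf]
  rw [h]
  exact (intervalIntegral.integral_hasDerivAt_right
    (integrable_stdPdf.intervalIntegrable)
    (continuous_stdPdf.stronglyMeasurableAtFilter _ _) continuous_stdPdf.continuousAt).const_add _

lemma continuous_stdCdf : Continuous stdCdf :=
  continuous_iff_continuousAt.2 fun x ↦ (hasDerivAt_stdCdf x).continuousAt

lemma lintegral_stdCdf_gaussianReal (b : ℝ) (V : NNReal) :
    ∫⁻ t, ENNReal.ofReal (stdCdf t) ∂gaussianReal b V =
      ENNReal.ofReal (stdCdf (b / √(V + 1))) := by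
  have hs : 0 < √((V : ℝ) + 1) := by positivity
  have h1 : (gaussianReal (-b) V ∗ gaussianReal 0 1) (Set.Iic 0) =
      ∫⁻ t, ENNReal.ofReal (stdCdf t) ∂gaussianReal b V := by
    have h (x : ℝ) : gaussianReal 0 1 (Prod.mk x ⁻¹' ((fun p : ℝ × ℝ ↦ p.1 + p.2) ⁻¹' Set.Iic 0)) =
        ENNReal.ofReal (stdCdf (-x)) := by
      rw [ofReal_stdCdf]
      congr 1
      ext u
      simp [le_neg_iff_add_nonpos_left]
    have := continuous_stdCdf.measurable
    rw [Measure.conv, Measure.map_apply (by fun_prop) measurableSet_Iic,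
      Measure.prod_apply (measurableSet_Iic.preimage (by fun_prop)), ← gaussianReal_map_neg]
    simp_rw [h]
    rw [lintegral_map (by fun_prop) (by fun_prop)]
    simp
  have h2 : gaussianReal (-b) (V + 1) =
      (gaussianReal 0 1).map (fun x ↦ √(V + 1) * x + -b) := by
    have := Measure.map_map (μ := gaussianReal 0 1) (g := fun x : ℝ ↦ x + -b)
      (f := fun x ↦ √((V : ℝ) + 1) * x) (by fun_prop) (by fun_prop)
    rw [gaussianReal_map_const_mul, gaussianReal_map_add_const] at this
    rw [Function.comp_def] at this
    rw [← this]
    congr 1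
    · simp
    · ext
      simp [Real.sq_sqrt (show (0 : ℝ) ≤ V + 1 by positivity)]
  rw [← h1, gaussianReal_conv_gaussianReal, add_zero, h2,
    Measure.map_apply (by fun_prop) measurableSet_Iic, ofReal_stdCdf]
  congr 1
  ext x
  simp only [Set.mem_preimage, Set.mem_Iic]
  rw [le_div_iff₀ hs]
  constructor <;> intro h <;> linarith

variable {n : ℕ}

lemma mvPdf_nonneg (μ : Fin n → ℝ) (S : Matrix (Fin n) (Fin n) ℝ) (x : Fin n → ℝ) :
    0 ≤ mvPdf μ S x := by
  unfold mvPdf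
  positivity

lemma continuous_mvPdf (μ : Fin n → ℝ) (S : Matrix (Fin n) (Fin n) ℝ) :
    Continuous (mvPdf μ S) := by
  unfold mvPdf
  fun_prop

lemma mvPdf_eq_mvPdf_zero_sub (μ : Fin n → ℝ) (S : Matrix (Fin n) (Fin n) ℝ) (x : Fin n → ℝ) :
    mvPdf μ S x = mvPdf 0 S (x - μ) := by
  simp [mvPdf]

lemma exp_mul_mvPdf {S : Matrix (Fin n) (Fin n) ℝ} (hS : S.PosDef) (μ w m : Fin n → ℝ) :
    Real.exp (w ⬝ᵥ m) * mvPdf μ S m =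
      Real.exp (w ⬝ᵥ μ + (w ⬝ᵥ (S *ᵥ w)) / 2) * mvPdf (μ + S *ᵥ w) S m := by
  have hdet : IsUnit S.det := hS.det_pos.ne'.isUnit
  have hsymm : S⁻¹ᵀ = S⁻¹ := by simpa using hS.inv.isHermitian.eq
  obtain ⟨x, rfl⟩ : ∃ x, m = μ + x := ⟨m - μ, by simp⟩
  have h1 : (S *ᵥ w) ⬝ᵥ (S⁻¹ *ᵥ x) = w ⬝ᵥ x := by
    rw [dotProduct_mulVec, ← mulVec_transpose, hsymm, mulVec_mulVec, Matrix.nonsing_inv_mul _ hdet,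
      one_mulVec]
  have h2 : S⁻¹ *ᵥ (S *ᵥ w) = w := by
    rw [mulVec_mulVec, Matrix.nonsing_inv_mul _ hdet, one_mulVec]
  simp only [mvPdf, add_sub_add_left_eq_sub, add_sub_cancel_left]
  rw [mul_left_comm, mul_left_comm (Real.exp _), ← Real.exp_add, ← Real.exp_add]
  congr 2
  rw [mulVec_sub, h2, sub_dotProduct, dotProduct_sub, dotProduct_sub, h1, dotProduct_comm x w,
    dotProduct_comm (S *ᵥ w) w, dotProduct_add]
  ring

lemma integrable_mvPdf_and_integral_mvPdf_zero {S : Matrix (Fin n) (Fin n) ℝ} (hS : S.PosDef) :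
    Integrable (mvPdf 0 S) ∧ ∫ x, mvPdf 0 S x = 1 := by
  obtain ⟨B, hB⟩ : ∃ B : Matrix (Fin n) (Fin n) ℝ, S⁻¹ = Bᵀ * B := by
    open scoped MatrixOrder in
    simpa [star_eq_conjTranspose] using
      CStarAlgebra.nonneg_iff_eq_star_mul_self.mp hS.inv.posSemidef.nonneg
  have hdetS := hS.det_pos
  have hdet : S.det * (B.det * B.det) = 1 := by
    have h := congrArg Matrix.det hB
    rw [Matrix.det_nonsing_inv, Ring.inverse_eq_inv', Matrix.det_mul, det_transpose] at h
    rw [← h, mul_inv_cancel₀ hdetS.ne']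
  have hB0 : B.det ≠ 0 := by
    intro h
    simp [h] at hdet
  set c : ℝ := (√((2 * Real.pi) ^ n * S.det))⁻¹
  let g : (Fin n → ℝ) → ℝ := fun x ↦ ∏ i, Real.exp (-(1 / 2) * x i ^ 2)
  have hpdf : mvPdf 0 S = fun x ↦ c * g (B.toLin' x) := by
    ext x
    simp only [mvPdf, c, g, sub_zero, hB]
    rw [← Real.exp_sum, ← Finset.mul_sum, ← mulVec_mulVec, dotProduct_mulVec, vecMul_transpose]
    simp [dotProduct, sq]
  have hgi : Integrable g :=
    Integrable.fintype_prod (f := fun (_ : Fin n) (x : ℝ) ↦ Real.exp (-(1 / 2) * x ^ 2))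
      fun _ ↦ integrable_exp_neg_mul_sq (by norm_num)
  have hgv : ∫ x, g x = √(2 * Real.pi) ^ n := by
    rw [integral_fintype_prod_volume_eq_pow (fun x : ℝ ↦ Real.exp (-(1 / 2) * x ^ 2)),
      integral_gaussian]
    simp [mul_comm]
  have hmap := Real.map_matrix_volume_pi_eq_smul_volume_pi hB0
  have hmeas : AEMeasurable (B.toLin' : (Fin n → ℝ) → Fin n → ℝ) :=
    (LinearMap.continuous_of_finiteDimensional _).aemeasurable
  have hgi' : Integrable g (Measure.map B.toLin' volume) := by
    rw [hmap]
    exact hgi.smul_measure ENNReal.ofReal_ne_top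
  have hBS : |B.det⁻¹| = √S.det := by
    rw [← Real.sqrt_sq_eq_abs]
    congr 1
    field_simp
    linarith
  refine ⟨?_, ?_⟩
  · rw [hpdf]
    exact (hgi'.comp_aemeasurable hmeas).const_mul c
  · rw [hpdf, integral_const_mul, ← integral_map hmeas hgi'.aestronglyMeasurable, hmap,
      integral_smul_measure, hgv, ENNReal.toReal_ofReal (abs_nonneg _), hBS, smul_eq_mul]
    have : 0 < √S.det := Real.sqrt_pos.2 hdetS
    have : 0 < √(2 * Real.pi) := by positivity
    simp only [c]
    have hpow : √((2 * Real.pi) ^ n) = √(2 * Real.pi) ^ n := by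
      rw [Real.sqrt_eq_iff_eq_sq (by positivity) (by positivity), pow_right_comm,
        Real.sq_sqrt (by positivity)]
    rw [Real.sqrt_mul (by positivity), hpow]
    field_simp

lemma integrable_mvPdf {S : Matrix (Fin n) (Fin n) ℝ} (hS : S.PosDef) (μ : Fin n → ℝ) :
    Integrable (mvPdf μ S) := by
  simpa [← mvPdf_eq_mvPdf_zero_sub] using
    (integrable_mvPdf_and_integral_mvPdf_zero hS).1.comp_sub_right μ

lemma integral_mvPdf {S : Matrix (Fin n) (Fin n) ℝ} (hS : S.PosDef) (μ : Fin n → ℝ) :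
    ∫ x, mvPdf μ S x = 1 := by
  simp_rw [mvPdf_eq_mvPdf_zero_sub μ]
  rw [integral_sub_right_eq_self, (integrable_mvPdf_and_integral_mvPdf_zero hS).2]

lemma integrable_exp_mul_mvPdf {S : Matrix (Fin n) (Fin n) ℝ} (hS : S.PosDef)
    (μ w : Fin n → ℝ) : Integrable fun m ↦ Real.exp (w ⬝ᵥ m) * mvPdf μ S m := by
  simp_rw [exp_mul_mvPdf hS]
  exact (integrable_mvPdf hS _).const_mul _

lemma integral_withDensity_ofReal {f : (Fin n → ℝ) → ℝ} (hf : Continuous f) (hf0 : ∀ x, 0 ≤ f x)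
    (g : (Fin n → ℝ) → ℝ) :
    ∫ x, g x ∂volume.withDensity (fun x ↦ ENNReal.ofReal (f x)) = ∫ x, g x * f x := by
  rw [integral_withDensity_eq_integral_toReal_smul (by fun_prop) (by simp)]
  simp [ENNReal.toReal_ofReal (hf0 _), mul_comm]

lemma integrable_withDensity_ofReal {f : (Fin n → ℝ) → ℝ} (hf : Continuous f) (hf0 : ∀ x, 0 ≤ f x)
    {g : (Fin n → ℝ) → ℝ} :
    Integrable g (volume.withDensity (fun x ↦ ENNReal.ofReal (f x))) ↔
      Integrable fun x ↦ g x * f x := by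
  rw [integrable_withDensity_iff (by fun_prop) (by simp)]
  simp [ENNReal.toReal_ofReal (hf0 _)]

lemma map_dotProduct_withDensity_mvPdf {S : Matrix (Fin n) (Fin n) ℝ} (hS : S.PosDef)
    (μ w : Fin n → ℝ) :
    (volume.withDensity fun m ↦ ENNReal.ofReal (mvPdf μ S m)).map (fun m ↦ w ⬝ᵥ m) =
      gaussianReal (w ⬝ᵥ μ) (w ⬝ᵥ (S *ᵥ w)).toNNReal := by
  set ν := volume.withDensity fun m ↦ ENNReal.ofReal (mvPdf μ S m)
  have hw : 0 ≤ w ⬝ᵥ (S *ᵥ w) := by simpa using hS.posSemidef.dotProduct_mulVec_nonneg w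
  have : IsProbabilityMeasure ν := by
    refine ⟨?_⟩
    rw [withDensity_apply _ .univ, Measure.restrict_univ, ← ofReal_integral_eq_lintegral_ofReal
      (integrable_mvPdf hS μ) (ae_of_all _ (mvPdf_nonneg μ S)), integral_mvPdf hS,
      ENNReal.ofReal_one]
  have hexp (t : ℝ) (m : Fin n → ℝ) : t * (w ⬝ᵥ m) = (t • w) ⬝ᵥ m := by simp
  have hset : integrableExpSet (fun m ↦ w ⬝ᵥ m) ν = Set.univ := by
    refine Set.eq_univ_of_forall fun t ↦ ?_
    simp only [integrableExpSet, Set.mem_ofPred_eq, hexp]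
    rw [integrable_withDensity_ofReal (continuous_mvPdf μ S) (mvPdf_nonneg μ S)]
    exact integrable_exp_mul_mvPdf hS μ _
  have hmgf : mgf (fun m ↦ w ⬝ᵥ m) ν =
      mgf id (gaussianReal (w ⬝ᵥ μ) (w ⬝ᵥ (S *ᵥ w)).toNNReal) := by
    ext t
    rw [mgf_id_gaussianReal, mgf]
    simp only [hexp]
    rw [integral_withDensity_ofReal (continuous_mvPdf μ S) (mvPdf_nonneg μ S)]
    simp_rw [exp_mul_mvPdf hS]
    rw [integral_const_mul, integral_mvPdf hS, mul_one, Real.coe_toNNReal _ hw]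
    congr 1
    simp [mulVec_smul]
    ring
  have h := eqOn_complexMGF_of_mgf hmgf
  simp only [hset, interior_univ, Set.mem_univ, Set.ofPred_true, Set.eqOn_univ] at h
  simpa using Measure.ext_of_complexMGF_eq (by fun_prop) aemeasurable_id h

lemma integral_mvPdf_mul_stdCdf {S : Matrix (Fin n) (Fin n) ℝ} (hS : S.PosDef)
    (μ w : Fin n → ℝ) :
    ∫ m, mvPdf μ S m * stdCdf (w ⬝ᵥ m) = stdCdf (w ⬝ᵥ μ / √(w ⬝ᵥ (S *ᵥ w) + 1)) := by
  have hw : 0 ≤ w ⬝ᵥ (S *ᵥ w) := by simpa using hS.posSemidef.dotProduct_mulVec_nonneg w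
  have h := continuous_stdCdf
  have h1 := lintegral_stdCdf_gaussianReal (w ⬝ᵥ μ) (w ⬝ᵥ (S *ᵥ w)).toNNReal
  rw [Real.coe_toNNReal _ hw] at h1
  simp_rw [mul_comm (mvPdf μ S _)]
  rw [← integral_withDensity_ofReal (continuous_mvPdf μ S) (mvPdf_nonneg μ S),
    ← integral_map (f := stdCdf) (φ := fun m ↦ w ⬝ᵥ m) (by fun_prop) (by fun_prop),
    map_dotProduct_withDensity_mvPdf hS,
    integral_eq_lintegral_of_nonneg_ae (ae_of_all _ stdCdf_nonneg) (by fun_prop), h1,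
    ENNReal.toReal_ofReal (stdCdf_nonneg _)]

lemma integral_mul_mvPdf_mul_stdCdf {S : Matrix (Fin n) (Fin n) ℝ} (hS : S.PosDef)
    (μ w : Fin n → ℝ) (j : Fin n) :
    ∫ m : Fin n → ℝ, m j * (mvPdf μ S m * stdCdf (w ⬝ᵥ m)) =
      μ j * stdCdf (w ⬝ᵥ μ / √(w ⬝ᵥ (S *ᵥ w) + 1)) +
        (S *ᵥ w) j * stdPdf (w ⬝ᵥ μ / √(w ⬝ᵥ (S *ᵥ w) + 1)) / √(w ⬝ᵥ (S *ᵥ w) + 1) := by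
  set s := √(w ⬝ᵥ (S *ᵥ w) + 1)
  let f : (Fin n → ℝ) → ℝ := fun m ↦ mvPdf μ S m * stdCdf (w ⬝ᵥ m)
  have hcdf := continuous_stdCdf
  have hpdf := continuous_mvPdf μ S
  have hf : Continuous f := by fun_prop
  have hf0 (m) : 0 ≤ f m := mul_nonneg (mvPdf_nonneg μ S m) (stdCdf_nonneg _)
  set ν := volume.withDensity fun m ↦ ENNReal.ofReal (f m)
  let e : Fin n → ℝ := Pi.single j 1
  have hexp (t : ℝ) (m : Fin n → ℝ) : t * m j = (t • e) ⬝ᵥ m := by simp [e]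
  have hwe : w ⬝ᵥ (S *ᵥ e) = (S *ᵥ w) j := by
    have hsymm : Sᵀ = S := by simpa using hS.isHermitian.eq
    rw [dotProduct_mulVec, ← mulVec_transpose, hsymm]
    simp [e]
  have hset : integrableExpSet (fun m : Fin n → ℝ ↦ m j) ν = Set.univ := by
    refine Set.eq_univ_of_forall fun t ↦ ?_
    simp only [integrableExpSet, Set.mem_ofPred_eq, hexp]
    rw [integrable_withDensity_ofReal hf hf0]
    simp_rw [f, ← mul_assoc]
    exact (integrable_exp_mul_mvPdf hS μ _).mul_bdd (c := 1) (by fun_prop)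
      (ae_of_all _ fun m ↦ by simpa [abs_of_nonneg (stdCdf_nonneg _)] using stdCdf_le_one _)
  have hmgf : mgf (fun m : Fin n → ℝ ↦ m j) ν = fun t ↦
      Real.exp (t * μ j + t ^ 2 * (e ⬝ᵥ (S *ᵥ e)) / 2) *
        stdCdf ((w ⬝ᵥ μ + t * (S *ᵥ w) j) / s) := by
    ext t
    rw [mgf]
    simp only [hexp]
    rw [integral_withDensity_ofReal hf hf0]
    simp_rw [f, ← mul_assoc, exp_mul_mvPdf hS, mul_assoc]
    rw [integral_const_mul, integral_mvPdf_mul_stdCdf hS]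
    congr 2
    · simp only [mulVec_smul, dotProduct_smul, smul_dotProduct, smul_eq_mul]
      ring
    · simp only [mulVec_smul, dotProduct_smul, dotProduct_add, smul_eq_mul, hwe, ← hexp, s]
  have hderiv : HasDerivAt (fun t ↦ Real.exp (t * μ j + t ^ 2 * (e ⬝ᵥ (S *ᵥ e)) / 2) *
        stdCdf ((w ⬝ᵥ μ + t * (S *ᵥ w) j) / s))
      (μ j * stdCdf (w ⬝ᵥ μ / s) + (S *ᵥ w) j * stdPdf (w ⬝ᵥ μ / s) / s) 0 := by
    have h1 : HasDerivAt (fun t : ℝ ↦ t * μ j + t ^ 2 * (e ⬝ᵥ (S *ᵥ e)) / 2) (μ j) 0 := by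
      refine (((hasDerivAt_id (0 : ℝ)).mul_const (μ j)).add
        ((((hasDerivAt_id (0 : ℝ)).pow 2).mul_const (e ⬝ᵥ (S *ᵥ e))).div_const 2)).congr_deriv ?_
      simp
    have h2 : HasDerivAt (fun t : ℝ ↦ (w ⬝ᵥ μ + t * (S *ᵥ w) j) / s) ((S *ᵥ w) j / s) 0 := by
      simpa using (((hasDerivAt_id (0 : ℝ)).mul_const ((S *ᵥ w) j)).const_add (w ⬝ᵥ μ)).div_const s
    refine (h1.exp.mul ((hasDerivAt_stdCdf _).comp 0 h2)).congr_deriv ?_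
    simp
    ring
  rw [← hmgf] at hderiv
  have h := deriv_mgf_zero (X := fun m : Fin n → ℝ ↦ m j) (μ := ν) (by simp [hset])
  rw [hderiv.deriv, integral_withDensity_ofReal hf hf0] at h
  exact h.symm

end GaussianTilt

/-- Mean of the probit-tilted multivariate Gaussian posterior
`p(m) ∝ φ(m; μ, Σ)Φ(y v'm)` equals `μ + y Σv φ(z)/(η √(v'Σv+1))`,
where `z = y v'μ/√(v'Σv+1)` and `η = Φ(z)`. -/
theorem stmt13 {n : ℕ} (μ : Fin n → ℝ) (S : Matrix (Fin n) (Fin n) ℝ)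
    (hS : S.PosDef) (v : Fin n → ℝ) (hv : ∃ i, v = Pi.single i 1)
    (y : ℝ) (hy : y = -1 ∨ y = 1)
    (z : ℝ) (hz : z = y * (v ⬝ᵥ μ) / Real.sqrt (v ⬝ᵥ (S *ᵥ v) + 1))
    (η : ℝ) (hη : η = stdCdf z)
    (Z : ℝ) (hZ : Z = ∫ m : Fin n → ℝ, mvPdf μ S m * stdCdf (y * (v ⬝ᵥ m)))
    (p : (Fin n → ℝ) → ℝ)
    (hp : p = fun m => Z⁻¹ * mvPdf μ S m * stdCdf (y * (v ⬝ᵥ m))) :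
    ∀ j, (∫ m : Fin n → ℝ, m j * p m) =
      μ j + y * (S *ᵥ v) j * stdPdf z / (η * Real.sqrt (v ⬝ᵥ (S *ᵥ v) + 1)) := by
  intro j
  have hvS : (y • v) ⬝ᵥ (S *ᵥ (y • v)) = v ⬝ᵥ (S *ᵥ v) := by
    rcases hy with rfl | rfl <;> simp [mulVec_neg]
  have hyv (m : Fin n → ℝ) : y * (v ⬝ᵥ m) = (y • v) ⬝ᵥ m := by simp
  have hZη : Z = η := by
    simp_rw [hZ, hyv]
    rw [integral_mvPdf_mul_stdCdf hS, hvS, hη, hz, hyv]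
  have hη0 : η ≠ 0 := hη ▸ (stdCdf_pos z).ne'
  have h := integral_mul_mvPdf_mul_stdCdf hS μ (y • v) j
  rw [hvS, ← hyv, ← hz, ← hη] at h
  simp_rw [hp, mul_assoc, mul_left_comm _ Z⁻¹, hyv]
  rw [integral_const_mul, h, hZη, mulVec_smul, Pi.smul_apply, smul_eq_mul]
  field_simp
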